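/- For every rational t with t ∉ {-1, 0, 1} such that t^2-6t+1 ≠ 0, t^2+6t+1 ≠ 0 (automatic over ℚ) and all relevant denominators are nonzero, the six rational functions a, b, c, d, e, f defined by: a = 18t(t-1)(t+1)/((t^2-6t+1)(t^2+6t+1)), b = (t-1)(t^2+6t+1)^2/(6t(t+1)(t^2-6t+1)), c = (t+1)(t^2-6t+1)^2/(6t(t-1)(t^2+6t+1)), and d = d1/d2, e = e1/e2, f = f1/f2 with d1, d2, e1, e2, f1, f2 the explicit polynomials given in the paper, form a rational Diophantine sextuple: the product of any two distinct elements increased by 1 is a square of a rational number. -/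

import Mathlib

theorem abs_ab (t u v p m N : ℚ) 
    (ht : t ≠ 0) (hv : v ≠ 0) (hp : p ≠ 0) (hm : m ≠ 0)
    (h : 3*u^2*m + (p)^2 = N^2) :
    ∃ q : ℚ, (18*t*u*v/(p*m)) * (u*m^2/(6*t*v*p)) + 1 = q^2 := by
  refine ⟨N / (p), ?_⟩
  rw [div_pow, ← h]
  field_simp
  try ring

theorem poly_ab (t : ℚ) :
    3*(t-1)^2*(t^2+6*t+1) + ((t^2-6*t+1))^2 =
    (2*t^2+2)^2 := by
  ring

theorem abs_ac (t u v p m N : ℚ) 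
    (ht : t ≠ 0) (hu : u ≠ 0) (hp : p ≠ 0) (hm : m ≠ 0)
    (h : 3*v^2*p + (m)^2 = N^2) :
    ∃ q : ℚ, (18*t*u*v/(p*m)) * (v*p^2/(6*t*u*m)) + 1 = q^2 := by
  refine ⟨N / (m), ?_⟩
  rw [div_pow, ← h]
  field_simp
  try ring

theorem poly_ac (t : ℚ) :
    3*(t+1)^2*(t^2-6*t+1) + ((t^2+6*t+1))^2 =
    (2*t^2+2)^2 := by
  ring

theorem abs_bc (t u v p m N : ℚ) 
    (ht : t ≠ 0) (hu : u ≠ 0) (hv : v ≠ 0) (hp : p ≠ 0) (hm : m ≠ 0)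
    (h : p*m + (6*t)^2 = N^2) :
    ∃ q : ℚ, (u*m^2/(6*t*v*p)) * (v*p^2/(6*t*u*m)) + 1 = q^2 := by
  refine ⟨N / (6*t), ?_⟩
  rw [div_pow, ← h]
  field_simp
  try ring

theorem poly_bc (t : ℚ) :
    (t^2-6*t+1)*(t^2+6*t+1) + (6*t)^2 =
    (1*t^2+1)^2 := by
  ring

theorem abs_ad (t u v p m P X N : ℚ) 
    (ht : t ≠ 0) (hp : p ≠ 0) (hm : m ≠ 0) (hP : P ≠ 0)
    (h : 108*u^2*v^2*X + (P)^2 = N^2) :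
    ∃ q : ℚ, (18*t*u*v/(p*m)) * (6*u*v*m*p*X/(t*P^2)) + 1 = q^2 := by
  refine ⟨N / (P), ?_⟩
  rw [div_pow, ← h]
  field_simp
  try ring

theorem poly_ad (t : ℚ) :
    108*(t-1)^2*(t+1)^2*((8*t^6+27*t^5+24*t^4-54*t^3+24*t^2+27*t+8)*(8*t^6-27*t^5+24*t^4+54*t^3+24*t^2-27*t+8)*(t^8+22*t^6-174*t^4+22*t^2+1)) + ((37*t^12-885*t^10+9735*t^8-13678*t^6+9735*t^4-885*t^2+37))^2 =
    (91*t^12+195*t^10-1983*t^8+7490*t^6-1983*t^4+195*t^2+91)^2 := by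
  ring

theorem abs_bd (t u v p m P X N : ℚ) 
    (ht : t ≠ 0) (hv : v ≠ 0) (hp : p ≠ 0) (hP : P ≠ 0)
    (h : u^2*m^3*X + (t*P)^2 = N^2) :
    ∃ q : ℚ, (u*m^2/(6*t*v*p)) * (6*u*v*m*p*X/(t*P^2)) + 1 = q^2 := by
  refine ⟨N / (t*P), ?_⟩
  rw [div_pow, ← h]
  field_simp
  try ring

theorem poly_bd (t : ℚ) :
    (t-1)^2*(t^2+6*t+1)^3*((8*t^6+27*t^5+24*t^4-54*t^3+24*t^2+27*t+8)*(8*t^6-27*t^5+24*t^4+54*t^3+24*t^2-27*t+8)*(t^8+22*t^6-174*t^4+22*t^2+1)) + (t*(37*t^12-885*t^10+9735*t^8-13678*t^6+9735*t^4-885*t^2+37))^2 =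
    (8*t^14+64*t^13+200*t^12-345*t^11-840*t^10+3876*t^9-3464*t^8-3094*t^7-3464*t^6
      +3876*t^5-840*t^4-345*t^3+200*t^2+64*t+8)^2 := by
  ring

theorem abs_cd (t u v p m P X N : ℚ) 
    (ht : t ≠ 0) (hu : u ≠ 0) (hm : m ≠ 0) (hP : P ≠ 0)
    (h : v^2*p^3*X + (t*P)^2 = N^2) :
    ∃ q : ℚ, (v*p^2/(6*t*u*m)) * (6*u*v*m*p*X/(t*P^2)) + 1 = q^2 := by
  refine ⟨N / (t*P), ?_⟩
  rw [div_pow, ← h]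
  field_simp
  try ring

theorem poly_cd (t : ℚ) :
    (t+1)^2*(t^2-6*t+1)^3*((8*t^6+27*t^5+24*t^4-54*t^3+24*t^2+27*t+8)*(8*t^6-27*t^5+24*t^4+54*t^3+24*t^2-27*t+8)*(t^8+22*t^6-174*t^4+22*t^2+1)) + (t*(37*t^12-885*t^10+9735*t^8-13678*t^6+9735*t^4-885*t^2+37))^2 =
    (8*t^14-64*t^13+200*t^12+345*t^11-840*t^10-3876*t^9-3464*t^8+3094*t^7-3464*t^6
      -3876*t^5-840*t^4+345*t^3+200*t^2-64*t+8)^2 := by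
  ring

theorem abs_ae (t u v p m Q Y N : ℚ) 
    (hu : u ≠ 0) (hv : v ≠ 0) (hp : p ≠ 0) (hm : m ≠ 0) (hQ : Q ≠ 0)
    (h : 6*t^2*Y + (p*m*Q)^2 = N^2) :
    ∃ q : ℚ, (18*t*u*v/(p*m)) * (t*Y/(3*u*v*m*p*Q^2)) + 1 = q^2 := by
  refine ⟨N / (p*m*Q), ?_⟩
  rw [div_pow, ← h]
  field_simp
  try ring

theorem poly_ae (t : ℚ) :
    6*t^2*(-2*(4*t^6-111*t^4+18*t^2+25)*(3*t^7+14*t^6-42*t^5+30*t^4+51*t^3+18*t^2-12*t+2)*(3*t^7-14*t^6-42*t^5-30*t^4+51*t^3-18*t^2-12*t-2)*(t^2+3*t-2)*(t^2-3*t-2)*(2*t^2+3*t-1)*(2*t^2-3*t-1)*(t^2+7)*(7*t^2+1)) + ((t^2-6*t+1)*(t^2+6*t+1)*(16*t^14+141*t^12-1500*t^10+7586*t^8-2724*t^6+165*t^4+424*t^2-12))^2 =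
    (16*t^18-781*t^16+12484*t^14+9755*t^12-27608*t^10+31061*t^8+47308*t^6-7279*t^4+568*t^2
      +12)^2 := by
  ring

theorem abs_af (t u v p m R Z N : ℚ) 
    (hu : u ≠ 0) (hv : v ≠ 0) (hp : p ≠ 0) (hm : m ≠ 0) (hR : R ≠ 0)
    (h : 6*t^2*Z + (p*m*R)^2 = N^2) :
    ∃ q : ℚ, (18*t*u*v/(p*m)) * (t*Z/(3*u*v*m*p*R^2)) + 1 = q^2 := by
  refine ⟨N / (p*m*R), ?_⟩
  rw [div_pow, ← h]
  field_simp
  try ring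

theorem poly_af (t : ℚ) :
    6*t^2*(2*(25*t^6+18*t^4-111*t^2+4)*(2*t^7-12*t^6+18*t^5+51*t^4+30*t^3-42*t^2+14*t+3)*(2*t^7+12*t^6+18*t^5-51*t^4+30*t^3+42*t^2+14*t-3)*(2*t^2+3*t-1)*(2*t^2-3*t-1)*(t^2-3*t-2)*(t^2+3*t-2)*(t^2+7)*(7*t^2+1)) + ((t^2-6*t+1)*(t^2+6*t+1)*(12*t^14-424*t^12-165*t^10+2724*t^8-7586*t^6+1500*t^4-141*t^2-16))^2 =
    (12*t^18+568*t^16-7279*t^14+47308*t^12+31061*t^10-27608*t^8+9755*t^6+12484*t^4-781*t^2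
      +16)^2 := by
  ring

theorem abs_be (t u v p m Q Y N : ℚ) 
    (ht : t ≠ 0) (hu : u ≠ 0) (hv : v ≠ 0) (hp : p ≠ 0) (hm : m ≠ 0) (hQ : Q ≠ 0)
    (h : 2*m*Y + (6*v*p*Q)^2 = N^2) :
    ∃ q : ℚ, (u*m^2/(6*t*v*p)) * (t*Y/(3*u*v*m*p*Q^2)) + 1 = q^2 := by
  refine ⟨N / (6*v*p*Q), ?_⟩
  rw [div_pow, ← h]
  field_simp
  try ring

theorem poly_be (t : ℚ) :
    2*(t^2+6*t+1)*(-2*(4*t^6-111*t^4+18*t^2+25)*(3*t^7+14*t^6-42*t^5+30*t^4+51*t^3+18*t^2-12*t+2)*(3*t^7-14*t^6-42*t^5-30*t^4+51*t^3-18*t^2-12*t-2)*(t^2+3*t-2)*(t^2-3*t-2)*(2*t^2+3*t-1)*(2*t^2-3*t-1)*(t^2+7)*(7*t^2+1)) + (6*(t+1)*(t^2-6*t+1)*(16*t^14+141*t^12-1500*t^10+7586*t^8-2724*t^6+165*t^4+424*t^2-12))^2 =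
    (72*t^17-808*t^16-48*t^15+6064*t^14+20832*t^13+3260*t^12-37692*t^11+65668*t^10
      -43692*t^9+14288*t^8-20904*t^7-53096*t^6-26424*t^5-484*t^4+9492*t^3-2252*t^2+60*t+128)^2 := by
  ring

theorem abs_bf (t u v p m R Z N : ℚ) 
    (ht : t ≠ 0) (hu : u ≠ 0) (hv : v ≠ 0) (hp : p ≠ 0) (hm : m ≠ 0) (hR : R ≠ 0)
    (h : 2*m*Z + (6*v*p*R)^2 = N^2) :
    ∃ q : ℚ, (u*m^2/(6*t*v*p)) * (t*Z/(3*u*v*m*p*R^2)) + 1 = q^2 := by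
  refine ⟨N / (6*v*p*R), ?_⟩
  rw [div_pow, ← h]
  field_simp
  try ring

theorem poly_bf (t : ℚ) :
    2*(t^2+6*t+1)*(2*(25*t^6+18*t^4-111*t^2+4)*(2*t^7-12*t^6+18*t^5+51*t^4+30*t^3-42*t^2+14*t+3)*(2*t^7+12*t^6+18*t^5-51*t^4+30*t^3+42*t^2+14*t-3)*(2*t^2+3*t-1)*(2*t^2-3*t-1)*(t^2-3*t-2)*(t^2+3*t-2)*(t^2+7)*(7*t^2+1)) + (6*(t+1)*(t^2-6*t+1)*(12*t^14-424*t^12-165*t^10+2724*t^8-7586*t^6+1500*t^4-141*t^2-16))^2 =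
    (128*t^17+60*t^16-2252*t^15+9492*t^14-484*t^13-26424*t^12-53096*t^11-20904*t^10
      +14288*t^9-43692*t^8+65668*t^7-37692*t^6+3260*t^5+20832*t^4+6064*t^3-48*t^2-808*t+72)^2 := by
  ring

theorem abs_ce (t u v p m Q Y N : ℚ) 
    (ht : t ≠ 0) (hu : u ≠ 0) (hv : v ≠ 0) (hp : p ≠ 0) (hm : m ≠ 0) (hQ : Q ≠ 0)
    (h : 2*p*Y + (6*u*m*Q)^2 = N^2) :
    ∃ q : ℚ, (v*p^2/(6*t*u*m)) * (t*Y/(3*u*v*m*p*Q^2)) + 1 = q^2 := by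
  refine ⟨N / (6*u*m*Q), ?_⟩
  rw [div_pow, ← h]
  field_simp
  try ring

theorem poly_ce (t : ℚ) :
    2*(t^2-6*t+1)*(-2*(4*t^6-111*t^4+18*t^2+25)*(3*t^7+14*t^6-42*t^5+30*t^4+51*t^3+18*t^2-12*t+2)*(3*t^7-14*t^6-42*t^5-30*t^4+51*t^3-18*t^2-12*t-2)*(t^2+3*t-2)*(t^2-3*t-2)*(2*t^2+3*t-1)*(2*t^2-3*t-1)*(t^2+7)*(7*t^2+1)) + (6*(t-1)*(t^2+6*t+1)*(16*t^14+141*t^12-1500*t^10+7586*t^8-2724*t^6+165*t^4+424*t^2-12))^2 =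
    (72*t^17+808*t^16-48*t^15-6064*t^14+20832*t^13-3260*t^12-37692*t^11-65668*t^10
      -43692*t^9-14288*t^8-20904*t^7+53096*t^6-26424*t^5+484*t^4+9492*t^3+2252*t^2+60*t-128)^2 := by
  ring

theorem abs_cf (t u v p m R Z N : ℚ) 
    (ht : t ≠ 0) (hu : u ≠ 0) (hv : v ≠ 0) (hp : p ≠ 0) (hm : m ≠ 0) (hR : R ≠ 0)
    (h : 2*p*Z + (6*u*m*R)^2 = N^2) :
    ∃ q : ℚ, (v*p^2/(6*t*u*m)) * (t*Z/(3*u*v*m*p*R^2)) + 1 = q^2 := by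
  refine ⟨N / (6*u*m*R), ?_⟩
  rw [div_pow, ← h]
  field_simp
  try ring

theorem poly_cf (t : ℚ) :
    2*(t^2-6*t+1)*(2*(25*t^6+18*t^4-111*t^2+4)*(2*t^7-12*t^6+18*t^5+51*t^4+30*t^3-42*t^2+14*t+3)*(2*t^7+12*t^6+18*t^5-51*t^4+30*t^3+42*t^2+14*t-3)*(2*t^2+3*t-1)*(2*t^2-3*t-1)*(t^2-3*t-2)*(t^2+3*t-2)*(t^2+7)*(7*t^2+1)) + (6*(t-1)*(t^2+6*t+1)*(12*t^14-424*t^12-165*t^10+2724*t^8-7586*t^6+1500*t^4-141*t^2-16))^2 =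
    (128*t^17-60*t^16-2252*t^15-9492*t^14-484*t^13+26424*t^12-53096*t^11+20904*t^10
      +14288*t^9+43692*t^8+65668*t^7+37692*t^6+3260*t^5-20832*t^4+6064*t^3+48*t^2-808*t-72)^2 := by
  ring

theorem abs_de (t u v p m P Q X Y N : ℚ) 
    (ht : t ≠ 0) (hu : u ≠ 0) (hv : v ≠ 0) (hp : p ≠ 0) (hm : m ≠ 0) (hP : P ≠ 0) (hQ : Q ≠ 0)
    (h : 2*X*Y + (P*Q)^2 = N^2) :
    ∃ q : ℚ, (6*u*v*m*p*X/(t*P^2)) * (t*Y/(3*u*v*m*p*Q^2)) + 1 = q^2 := by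
  refine ⟨N / (P*Q), ?_⟩
  rw [div_pow, ← h]
  field_simp
  try ring

theorem poly_de (t : ℚ) :
    2*((8*t^6+27*t^5+24*t^4-54*t^3+24*t^2+27*t+8)*(8*t^6-27*t^5+24*t^4+54*t^3+24*t^2-27*t+8)*(t^8+22*t^6-174*t^4+22*t^2+1))*(-2*(4*t^6-111*t^4+18*t^2+25)*(3*t^7+14*t^6-42*t^5+30*t^4+51*t^3+18*t^2-12*t+2)*(3*t^7-14*t^6-42*t^5-30*t^4+51*t^3-18*t^2-12*t-2)*(t^2+3*t-2)*(t^2-3*t-2)*(2*t^2+3*t-1)*(2*t^2-3*t-1)*(t^2+7)*(7*t^2+1)) + ((37*t^12-885*t^10+9735*t^8-13678*t^6+9735*t^4-885*t^2+37)*(16*t^14+141*t^12-1500*t^10+7586*t^8-2724*t^6+165*t^4+424*t^2-12))^2 =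
    (304*t^26+12305*t^24-372795*t^22+1954057*t^20-13544128*t^18+50268150*t^16
      -14022642*t^14+37921458*t^12-11371500*t^10+2645821*t^8-3531979*t^6+387525*t^4
      -15884*t^2+956)^2 := by
  ring

theorem abs_df (t u v p m P R X Z N : ℚ) 
    (ht : t ≠ 0) (hu : u ≠ 0) (hv : v ≠ 0) (hp : p ≠ 0) (hm : m ≠ 0) (hP : P ≠ 0) (hR : R ≠ 0)
    (h : 2*X*Z + (P*R)^2 = N^2) :
    ∃ q : ℚ, (6*u*v*m*p*X/(t*P^2)) * (t*Z/(3*u*v*m*p*R^2)) + 1 = q^2 := by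
  refine ⟨N / (P*R), ?_⟩
  rw [div_pow, ← h]
  field_simp
  try ring

theorem poly_df (t : ℚ) :
    2*((8*t^6+27*t^5+24*t^4-54*t^3+24*t^2+27*t+8)*(8*t^6-27*t^5+24*t^4+54*t^3+24*t^2-27*t+8)*(t^8+22*t^6-174*t^4+22*t^2+1))*(2*(25*t^6+18*t^4-111*t^2+4)*(2*t^7-12*t^6+18*t^5+51*t^4+30*t^3-42*t^2+14*t+3)*(2*t^7+12*t^6+18*t^5-51*t^4+30*t^3+42*t^2+14*t-3)*(2*t^2+3*t-1)*(2*t^2-3*t-1)*(t^2-3*t-2)*(t^2+3*t-2)*(t^2+7)*(7*t^2+1)) + ((37*t^12-885*t^10+9735*t^8-13678*t^6+9735*t^4-885*t^2+37)*(12*t^14-424*t^12-165*t^10+2724*t^8-7586*t^6+1500*t^4-141*t^2-16))^2 =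
    (956*t^26-15884*t^24+387525*t^22-3531979*t^20+2645821*t^18-11371500*t^16+37921458*t^14
      -14022642*t^12+50268150*t^10-13544128*t^8+1954057*t^6-372795*t^4+12305*t^2+304)^2 := by
  ring

theorem abs_ef (t u v p m Q R Y Z N : ℚ) 
    (hu : u ≠ 0) (hv : v ≠ 0) (hp : p ≠ 0) (hm : m ≠ 0) (hQ : Q ≠ 0) (hR : R ≠ 0)
    (h : t^2*Y*Z + (3*u*v*p*m*Q*R)^2 = N^2) :
    ∃ q : ℚ, (t*Y/(3*u*v*m*p*Q^2)) * (t*Z/(3*u*v*m*p*R^2)) + 1 = q^2 := by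
  refine ⟨N / (3*u*v*p*m*Q*R), ?_⟩
  rw [div_pow, ← h]
  field_simp
  try ring

theorem poly_ef (t : ℚ) :
    t^2*(-2*(4*t^6-111*t^4+18*t^2+25)*(3*t^7+14*t^6-42*t^5+30*t^4+51*t^3+18*t^2-12*t+2)*(3*t^7-14*t^6-42*t^5-30*t^4+51*t^3-18*t^2-12*t-2)*(t^2+3*t-2)*(t^2-3*t-2)*(2*t^2+3*t-1)*(2*t^2-3*t-1)*(t^2+7)*(7*t^2+1))*(2*(25*t^6+18*t^4-111*t^2+4)*(2*t^7-12*t^6+18*t^5+51*t^4+30*t^3-42*t^2+14*t+3)*(2*t^7+12*t^6+18*t^5-51*t^4+30*t^3+42*t^2+14*t-3)*(2*t^2+3*t-1)*(2*t^2-3*t-1)*(t^2-3*t-2)*(t^2+3*t-2)*(t^2+7)*(7*t^2+1)) + (3*(t-1)*(t+1)*(t^2-6*t+1)*(t^2+6*t+1)*(16*t^14+141*t^12-1500*t^10+7586*t^8-2724*t^6+165*t^4+424*t^2-12)*(12*t^14-424*t^12-165*t^10+2724*t^8-7586*t^6+1500*t^4-141*t^2-16))^2 =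
    (576*t^34-45236*t^32+734892*t^30+218697*t^28+37161143*t^26-374085957*t^24
      +710565045*t^22-1870093658*t^20+2569286322*t^18+2569286322*t^16-1870093658*t^14
      +710565045*t^12-374085957*t^10+37161143*t^8+218697*t^6+734892*t^4-45236*t^2+576)^2 := by
  ring

theorem parametric_sextuple (t : ℚ) (ht : t ≠ -1 ∧ t ≠ 0 ∧ t ≠ 1)
    (h1 : t^2 - 6*t + 1 ≠ 0) (h2 : t^2 + 6*t + 1 ≠ 0)
    (a b c d e f : ℚ)
    (hA : a = 18*t*(t-1)*(t+1) / ((t^2-6*t+1)*(t^2+6*t+1)))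
    (hB : b = (t-1)*(t^2+6*t+1)^2 / (6*t*(t+1)*(t^2-6*t+1)))
    (hC : c = (t+1)*(t^2-6*t+1)^2 / (6*t*(t-1)*(t^2+6*t+1)))
    (hD : d = (6*(t+1)*(t-1)*(t^2+6*t+1)*(t^2-6*t+1)
        * (8*t^6+27*t^5+24*t^4-54*t^3+24*t^2+27*t+8)
        * (8*t^6-27*t^5+24*t^4+54*t^3+24*t^2-27*t+8)
        * (t^8+22*t^6-174*t^4+22*t^2+1))
      / (t*(37*t^12-885*t^10+9735*t^8-13678*t^6+9735*t^4-885*t^2+37)^2))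
    (hd2 : t*(37*t^12-885*t^10+9735*t^8-13678*t^6+9735*t^4-885*t^2+37)^2 ≠ 0)
    (hE : e = (-2*t*(4*t^6-111*t^4+18*t^2+25)
        * (3*t^7+14*t^6-42*t^5+30*t^4+51*t^3+18*t^2-12*t+2)
        * (3*t^7-14*t^6-42*t^5-30*t^4+51*t^3-18*t^2-12*t-2)
        * (t^2+3*t-2)*(t^2-3*t-2)*(2*t^2+3*t-1)*(2*t^2-3*t-1)*(t^2+7)*(7*t^2+1))
      / (3*(t+1)*(t^2-6*t+1)*(t-1)*(t^2+6*t+1)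
        * (16*t^14+141*t^12-1500*t^10+7586*t^8-2724*t^6+165*t^4+424*t^2-12)^2))
    (he2 : 3*(t+1)*(t^2-6*t+1)*(t-1)*(t^2+6*t+1)
        * (16*t^14+141*t^12-1500*t^10+7586*t^8-2724*t^6+165*t^4+424*t^2-12)^2 ≠ 0)
    (hF : f = (2*t*(25*t^6+18*t^4-111*t^2+4)
        * (2*t^7-12*t^6+18*t^5+51*t^4+30*t^3-42*t^2+14*t+3)
        * (2*t^7+12*t^6+18*t^5-51*t^4+30*t^3+42*t^2+14*t-3)
        * (2*t^2+3*t-1)*(2*t^2-3*t-1)*(t^2-3*t-2)*(t^2+3*t-2)*(t^2+7)*(7*t^2+1))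
      / (3*(t+1)*(t^2-6*t+1)*(t-1)*(t^2+6*t+1)
        * (12*t^14-424*t^12-165*t^10+2724*t^8-7586*t^6+1500*t^4-141*t^2-16)^2))
    (hf2 : 3*(t+1)*(t^2-6*t+1)*(t-1)*(t^2+6*t+1)
        * (12*t^14-424*t^12-165*t^10+2724*t^8-7586*t^6+1500*t^4-141*t^2-16)^2 ≠ 0) :
    ∀ x ∈ ({a, b, c, d, e, f} : Set ℚ), ∀ y ∈ ({a, b, c, d, e, f} : Set ℚ),
      x ≠ y → ∃ q : ℚ, x * y + 1 = q ^ 2 := by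
  obtain ⟨tm, t0, t1⟩ := ht
  have hu : t - 1 ≠ 0 := sub_ne_zero.mpr t1
  have hv : t + 1 ≠ 0 := fun h => tm (by linarith)
  have hP : (37*t^12-885*t^10+9735*t^8-13678*t^6+9735*t^4-885*t^2+37) ≠ 0 := by
    intro h
    apply hd2
    rw [h]
    ring
  have hQ : (16*t^14+141*t^12-1500*t^10+7586*t^8-2724*t^6+165*t^4+424*t^2-12) ≠ 0 := by
    intro h
    apply he2
    rw [h]
    ring
  have hR : (12*t^14-424*t^12-165*t^10+2724*t^8-7586*t^6+1500*t^4-141*t^2-16) ≠ 0 := by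
    intro h
    apply hf2
    rw [h]
    ring
  have hA' : a = 18*t*(t-1)*(t+1)/((t^2-6*t+1)*(t^2+6*t+1)) := by
    rw [hA]
  have hB' : b = (t-1)*(t^2+6*t+1)^2/(6*t*(t+1)*(t^2-6*t+1)) := by
    rw [hB]
  have hC' : c = (t+1)*(t^2-6*t+1)^2/(6*t*(t-1)*(t^2+6*t+1)) := by
    rw [hC]
  have hD' : d = 6*(t-1)*(t+1)*(t^2+6*t+1)*(t^2-6*t+1)*((8*t^6+27*t^5+24*t^4-54*t^3+24*t^2+27*t+8)*(8*t^6-27*t^5+24*t^4+54*t^3+24*t^2-27*t+8)*(t^8+22*t^6-174*t^4+22*t^2+1))/(t*(37*t^12-885*t^10+9735*t^8-13678*t^6+9735*t^4-885*t^2+37)^2) := by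
    rw [hD]
    congr 1 <;> ring
  have hE' : e = t*(-2*(4*t^6-111*t^4+18*t^2+25)*(3*t^7+14*t^6-42*t^5+30*t^4+51*t^3+18*t^2-12*t+2)*(3*t^7-14*t^6-42*t^5-30*t^4+51*t^3-18*t^2-12*t-2)*(t^2+3*t-2)*(t^2-3*t-2)*(2*t^2+3*t-1)*(2*t^2-3*t-1)*(t^2+7)*(7*t^2+1))/(3*(t-1)*(t+1)*(t^2+6*t+1)*(t^2-6*t+1)*(16*t^14+141*t^12-1500*t^10+7586*t^8-2724*t^6+165*t^4+424*t^2-12)^2) := by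
    rw [hE]
    congr 1 <;> ring
  have hF' : f = t*(2*(25*t^6+18*t^4-111*t^2+4)*(2*t^7-12*t^6+18*t^5+51*t^4+30*t^3-42*t^2+14*t+3)*(2*t^7+12*t^6+18*t^5-51*t^4+30*t^3+42*t^2+14*t-3)*(2*t^2+3*t-1)*(2*t^2-3*t-1)*(t^2-3*t-2)*(t^2+3*t-2)*(t^2+7)*(7*t^2+1))/(3*(t-1)*(t+1)*(t^2+6*t+1)*(t^2-6*t+1)*(12*t^14-424*t^12-165*t^10+2724*t^8-7586*t^6+1500*t^4-141*t^2-16)^2) := by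
    rw [hF]
    congr 1 <;> ring
  have h_ab : ∃ q : ℚ, a * b + 1 = q^2 := by
    rw [hA', hB']
    exact abs_ab t _ _ _ _ _ t0 hv h1 h2 (poly_ab t)
  have h_ac : ∃ q : ℚ, a * c + 1 = q^2 := by
    rw [hA', hC']
    exact abs_ac t _ _ _ _ _ t0 hu h1 h2 (poly_ac t)
  have h_bc : ∃ q : ℚ, b * c + 1 = q^2 := by
    rw [hB', hC']
    exact abs_bc t _ _ _ _ _ t0 hu hv h1 h2 (poly_bc t)
  have h_ad : ∃ q : ℚ, a * d + 1 = q^2 := by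
    rw [hA', hD']
    exact abs_ad t _ _ _ _ _ _ _ t0 h1 h2 hP (poly_ad t)
  have h_bd : ∃ q : ℚ, b * d + 1 = q^2 := by
    rw [hB', hD']
    exact abs_bd t _ _ _ _ _ _ _ t0 hv h1 hP (poly_bd t)
  have h_cd : ∃ q : ℚ, c * d + 1 = q^2 := by
    rw [hC', hD']
    exact abs_cd t _ _ _ _ _ _ _ t0 hu h2 hP (poly_cd t)
  have h_ae : ∃ q : ℚ, a * e + 1 = q^2 := by
    rw [hA', hE']
    exact abs_ae t _ _ _ _ _ _ _ hu hv h1 h2 hQ (poly_ae t)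
  have h_af : ∃ q : ℚ, a * f + 1 = q^2 := by
    rw [hA', hF']
    exact abs_af t _ _ _ _ _ _ _ hu hv h1 h2 hR (poly_af t)
  have h_be : ∃ q : ℚ, b * e + 1 = q^2 := by
    rw [hB', hE']
    exact abs_be t _ _ _ _ _ _ _ t0 hu hv h1 h2 hQ (poly_be t)
  have h_bf : ∃ q : ℚ, b * f + 1 = q^2 := by
    rw [hB', hF']
    exact abs_bf t _ _ _ _ _ _ _ t0 hu hv h1 h2 hR (poly_bf t)
  have h_ce : ∃ q : ℚ, c * e + 1 = q^2 := by
    rw [hC', hE']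
    exact abs_ce t _ _ _ _ _ _ _ t0 hu hv h1 h2 hQ (poly_ce t)
  have h_cf : ∃ q : ℚ, c * f + 1 = q^2 := by
    rw [hC', hF']
    exact abs_cf t _ _ _ _ _ _ _ t0 hu hv h1 h2 hR (poly_cf t)
  have h_de : ∃ q : ℚ, d * e + 1 = q^2 := by
    rw [hD', hE']
    exact abs_de t _ _ _ _ _ _ _ _ _ t0 hu hv h1 h2 hP hQ (poly_de t)
  have h_df : ∃ q : ℚ, d * f + 1 = q^2 := by
    rw [hD', hF']
    exact abs_df t _ _ _ _ _ _ _ _ _ t0 hu hv h1 h2 hP hR (poly_df t)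
  have h_ef : ∃ q : ℚ, e * f + 1 = q^2 := by
    rw [hE', hF']
    exact abs_ef t _ _ _ _ _ _ _ _ _ hu hv h1 h2 hQ hR (poly_ef t)
  have key : ∀ {x y : ℚ}, (∃ q : ℚ, x * y + 1 = q^2) → ∃ q : ℚ, y * x + 1 = q^2 := by
    rintro x y ⟨q, hq⟩
    exact ⟨q, by rw [mul_comm, hq]⟩
  clear hA hB hC hD hE hF hA' hB' hC' hD' hE' hF' hd2 he2 hf2 hP hQ hR
  intro x hx y hy hxy
  simp only [Set.mem_insert_iff, Set.mem_singleton_iff] at hx hy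
  rcases hx with rfl | rfl | rfl | rfl | rfl | rfl <;>
    rcases hy with rfl | rfl | rfl | rfl | rfl | rfl <;>
    first
      | exact absurd rfl hxy
      | assumption
      | (apply key; assumption)
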